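/- arXiv:2512.10704 — 2 statements merged into one kernel-verified Lean document; each statement's English description precedes it below -/
import Mathlib

section
/- Let λ_k = 4π²|k|² + 1 for k ∈ ℤ². Then as λ → 0⁺, the sum N₀(λ) = Σ_{k ∈ ℤ²} 1/(e^{λ λ_k} - 1) satisfies N₀(λ) = -(1/(4π)) λ^{-1} log λ + O(λ^{-1}). -/
open Real Filter Asymptotics

open HurwitzZeta
open scoped Topology

/-!
Expanding `1 / (e^{λ(ε + m)} - 1)` as a geometric series turns the particle number into
`∑_{n ≥ 1} e^{-nλm} Z(nλ)`, where `Z(t) = ∑ e^{-tε}` is the heat trace of the spectrum without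
its mass term. If `Z(t) = c / t + O(1)`, the leading term contributes
`(c / λ) ∑ e^{-nλm} / n = -(c / λ) log (1 - e^{-λm})` and the error `O(∑ e^{-nλm}) = O(λ⁻¹)`. On
the unit two-dimensional torus `Z(t) = θ(4πt)²` with the Jacobi theta function
`θ(a) = ∑ e^{-πan²}` (Mathlib's `evenKernel 0`), and `θ(a) = a^{-1/2} θ(1/a)` gives `c = 1 / (4π)`.
-/

section ExponentialSeries

variable {x : ℝ}

theorem hasSum_exp_neg_natCast_add_one_mul (hx : 0 < x) :
    HasSum (fun n : ℕ => exp (-((n + 1) * x))) (1 / (exp x - 1)) := by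
  have hlt : exp (-x) < 1 := exp_lt_one_iff.2 (neg_lt_zero.2 hx)
  have hval : exp (-x) * (1 - exp (-x))⁻¹ = 1 / (exp x - 1) := by
    rw [exp_neg, ← mul_inv, mul_sub, mul_one, mul_inv_cancel₀ (exp_ne_zero x), one_div]
  rw [← hval]
  refine ((hasSum_geometric_of_lt_one (exp_nonneg _) hlt).mul_left _).congr_fun fun n => ?_
  rw [← exp_nat_mul, ← exp_add]
  ring_nf

theorem hasSum_exp_neg_natCast_add_one_mul_div (hx : 0 < x) :
    HasSum (fun n : ℕ => exp (-((n + 1) * x)) / (n + 1)) (-log (1 - exp (-x))) := by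
  have hlt : |exp (-x)| < 1 := by
    rw [abs_exp]
    exact exp_lt_one_iff.2 (neg_lt_zero.2 hx)
  refine (hasSum_pow_div_log_of_abs_lt_one hlt).congr_fun fun n => ?_
  rw [← exp_nat_mul]
  push_cast
  ring_nf

theorem one_div_exp_sub_one_le_inv (hx : 0 < x) : 1 / (exp x - 1) ≤ x⁻¹ := by
  rw [one_div]
  exact inv_anti₀ hx (by linarith [add_one_le_exp x])

end ExponentialSeries

theorem tendsto_log_one_sub_exp_neg_mul_sub_log {m : ℝ} (hm : 0 < m) :
    Tendsto (fun x => log (1 - exp (-(x * m))) - log x) (𝓝[>] 0) (𝓝 (log m)) := by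
  have hderiv : HasDerivAt (fun x => 1 - exp (-(x * m))) m 0 := by
    simpa using (((hasDerivAt_id (0 : ℝ)).mul_const m).neg.exp).const_sub 1
  have hquot : Tendsto (fun x => (1 - exp (-(x * m))) / x) (𝓝[>] 0) (𝓝 m) := by
    simpa [div_eq_inv_mul] using hderiv.tendsto_slope_zero_right
  refine (hquot.log hm.ne').congr' ?_
  filter_upwards [self_mem_nhdsWithin] with x hx
  have hpos : 0 < 1 - exp (-(x * m)) :=
    sub_pos.2 (exp_lt_one_iff.2 (neg_lt_zero.2 (mul_pos hx hm)))
  exact log_div hpos.ne' (ne_of_gt hx)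

theorem summable_one_div_exp_sub_one {ι : Type*} {x : ι → ℝ}
    (hs : Summable fun i => exp (-x i)) : Summable fun i => 1 / (exp (x i) - 1) := by
  refine (hs.mul_left 2).of_norm_bounded_eventually ?_
  filter_upwards [hs.tendsto_cofinite_zero.eventually_le_const one_half_pos] with i hi
  have h2 : 2 ≤ exp (x i) := by
    rwa [exp_neg, one_div, inv_le_inv₀ (exp_pos _) two_pos] at hi
  rw [norm_of_nonneg (one_div_nonneg.2 (by linarith)), exp_neg, ← div_eq_mul_inv,
    div_le_div_iff₀ (by linarith) (exp_pos _)]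
  linarith

section BoseGas

variable {ι κ : Type*}

/-- The heat trace `Tr e^{-tH}` of an operator `H` with eigenvalues `ε i`, counted with
multiplicity; it is `0` when the series diverges. -/
noncomputable def heatTrace (ε : ι → ℝ) (t : ℝ) : ℝ :=
  ∑' i, exp (-(t * ε i))

/-- The expected particle number, at inverse temperature `lam`, of the free Bose gas whose one-body
Hamiltonian has eigenvalues `ε i`, counted with multiplicity: the sum of the Bose-Einstein
occupation numbers, with value `0` when their series diverges. -/
noncomputable def particleNumber (ε : ι → ℝ) (lam : ℝ) : ℝ :=
  ∑' i, 1 / (exp (lam * ε i) - 1)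

theorem heatTrace_nonneg (ε : ι → ℝ) (t : ℝ) : 0 ≤ heatTrace ε t :=
  tsum_nonneg fun _ => exp_nonneg _

theorem heatTrace_add_const (ε : ι → ℝ) (m t : ℝ) :
    heatTrace (fun i => ε i + m) t = exp (-(t * m)) * heatTrace ε t := by
  simp only [heatTrace, ← tsum_mul_left, ← exp_add, mul_add, neg_add_rev]

theorem summable_exp_neg_mul_add {ε : ι → ℝ} {δ : κ → ℝ} {t : ℝ}
    (hε : Summable fun i => exp (-(t * ε i))) (hδ : Summable fun j => exp (-(t * δ j))) :
    Summable fun p : ι × κ => exp (-(t * (ε p.1 + δ p.2))) := by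
  simpa only [mul_add, neg_add, exp_add] using
    hε.mul_of_nonneg hδ (fun _ => exp_nonneg _) fun _ => exp_nonneg _

theorem heatTrace_add {ε : ι → ℝ} {δ : κ → ℝ} {t : ℝ}
    (hε : Summable fun i => exp (-(t * ε i))) (hδ : Summable fun j => exp (-(t * δ j))) :
    heatTrace (fun p : ι × κ => ε p.1 + δ p.2) t = heatTrace ε t * heatTrace δ t := by
  simp only [heatTrace, mul_add, neg_add, exp_add]
  exact (tsum_mul_tsum_of_summable_norm hε.norm hδ.norm).symm

theorem hasSum_heatTrace_particleNumber {ε : ι → ℝ} {lam : ℝ} (hε : ∀ i, 0 < ε i) (hlam : 0 < lam)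
    (hs : Summable fun i => exp (-(lam * ε i))) :
    HasSum (fun n : ℕ => heatTrace ε ((n + 1) * lam)) (particleNumber ε lam) := by
  have hgeom (i : ι) : HasSum (fun n : ℕ => exp (-((n + 1) * (lam * ε i))))
      (1 / (exp (lam * ε i) - 1)) :=
    hasSum_exp_neg_natCast_add_one_mul (mul_pos hlam (hε i))
  have hF : Summable fun p : ι × ℕ => exp (-((p.2 + 1) * (lam * ε p.1))) := by
    rw [summable_prod_of_nonneg fun _ => exp_nonneg _]
    exact ⟨fun i => (hgeom i).summable,
      (summable_one_div_exp_sub_one hs).congr fun i => (hgeom i).tsum_eq.symm⟩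
  have htotal : ∑' p : ℕ × ι, exp (-((p.1 + 1) * (lam * ε p.2))) = particleNumber ε lam := by
    rw [← (Equiv.prodComm ι ℕ).tsum_eq]
    exact (hF.hasSum.prod_fiberwise hgeom).tsum_eq.symm
  rw [← htotal]
  refine hF.prod_symm.hasSum.prod_fiberwise fun n => ?_
  simpa only [heatTrace, Prod.swap_prod_mk, mul_assoc] using (hF.prod_symm.prod_factor n).hasSum

section HeatTraceAsymptotics

variable {ε : ι → ℝ} {c : ℝ}

theorem antitoneOn_heatTrace (hε : ∀ i, 0 ≤ ε i)
    (hs : ∀ t > 0, Summable fun i => exp (-(t * ε i))) :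
    AntitoneOn (heatTrace ε) (Set.Ioi 0) := fun s hs0 t ht0 hst =>
  (hs t ht0).tsum_le_tsum
    (fun i => exp_le_exp.2 (neg_le_neg (mul_le_mul_of_nonneg_right hst (hε i)))) (hs s hs0)

theorem exists_forall_abs_heatTrace_sub_div_le (hε : ∀ i, 0 ≤ ε i)
    (hs : ∀ t > 0, Summable fun i => exp (-(t * ε i)))
    (h : (fun t => heatTrace ε t - c / t) =O[𝓝[>] 0] fun _ => (1 : ℝ)) :
    ∃ C, ∀ t > 0, |heatTrace ε t - c / t| ≤ C := by
  obtain ⟨C, hC⟩ := h.bound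
  obtain ⟨δ, hδ, hsmall⟩ := mem_nhdsGT_iff_exists_Ioc_subset.1 hC
  refine ⟨max C (heatTrace ε δ + |c| / δ), fun t ht => ?_⟩
  rcases le_total t δ with htδ | hδt
  · simpa using Or.inl (hsmall ⟨ht, htδ⟩)
  · refine le_max_of_le_right ?_
    calc |heatTrace ε t - c / t| ≤ |heatTrace ε t| + |c / t| := abs_sub _ _
      _ = heatTrace ε t + |c| / t := by
        rw [abs_of_nonneg (heatTrace_nonneg ε t), abs_div, abs_of_pos ht]
      _ ≤ heatTrace ε δ + |c| / δ :=
        add_le_add (antitoneOn_heatTrace hε hs hδ ht hδt)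
          (div_le_div_of_nonneg_left (abs_nonneg c) hδ hδt)

theorem abs_particleNumber_add_const_sub_le {C m lam : ℝ} (hε : ∀ i, 0 ≤ ε i)
    (hs : Summable fun i => exp (-(lam * ε i)))
    (hC : ∀ t > 0, |heatTrace ε t - c / t| ≤ C) (hm : 0 < m) (hlam : 0 < lam) :
    |particleNumber (fun i => ε i + m) lam - c / lam * -log (1 - exp (-(lam * m)))|
      ≤ C * (1 / (exp (lam * m) - 1)) := by
  have hN := hasSum_heatTrace_particleNumber (fun i => add_pos_of_nonneg_of_pos (hε i) hm) hlam <|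
    (hs.mul_right (exp (-(lam * m)))).congr fun i => by rw [← exp_add]; ring_nf
  have hL := (hasSum_exp_neg_natCast_add_one_mul_div (mul_pos hlam hm)).mul_left (c / lam)
  have hE := (hasSum_exp_neg_natCast_add_one_mul (mul_pos hlam hm)).mul_left C
  rw [← (hN.sub hL).tsum_eq, ← norm_eq_abs]
  refine tsum_of_norm_bounded hE fun n => ?_
  have hfactor : heatTrace (fun i => ε i + m) ((n + 1) * lam)
      - c / lam * (exp (-((n + 1) * (lam * m))) / (n + 1))
      = (heatTrace ε ((n + 1) * lam) - c / ((n + 1) * lam)) * exp (-((n + 1) * (lam * m))) := by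
    rw [heatTrace_add_const, mul_assoc]
    field_simp
  rw [hfactor, norm_mul, norm_eq_abs, norm_eq_abs, abs_exp]
  exact mul_le_mul_of_nonneg_right (hC _ (by positivity)) (exp_nonneg _)

theorem isBigO_particleNumber_add_const_sub (hε : ∀ i, 0 ≤ ε i)
    (hs : ∀ t > 0, Summable fun i => exp (-(t * ε i))) {m : ℝ} (hm : 0 < m)
    (h : (fun t => heatTrace ε t - c / t) =O[𝓝[>] 0] fun _ => (1 : ℝ)) :
    (fun lam => particleNumber (fun i => ε i + m) lam - -c * lam⁻¹ * log lam)
      =O[𝓝[>] 0] fun lam => lam⁻¹ := by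
  obtain ⟨C, hC⟩ := exists_forall_abs_heatTrace_sub_div_le hε hs h
  have hC0 : 0 ≤ C := (abs_nonneg _).trans (hC 1 one_pos)
  have hmain : (fun lam => particleNumber (fun i => ε i + m) lam
      - c / lam * -log (1 - exp (-(lam * m)))) =O[𝓝[>] 0] fun lam => lam⁻¹ := by
    refine .of_bound (C * m⁻¹) ?_
    filter_upwards [self_mem_nhdsWithin] with lam hlam
    rw [norm_eq_abs, norm_of_nonneg (inv_nonneg.2 (le_of_lt hlam)), mul_assoc, ← mul_inv_rev]
    exact (abs_particleNumber_add_const_sub_le hε (hs lam hlam) hC hm hlam).trans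
      (mul_le_mul_of_nonneg_left (one_div_exp_sub_one_le_inv (mul_pos hlam hm)) hC0)
  have hlog : (fun lam => c * lam⁻¹ * (log (1 - exp (-(lam * m))) - log lam))
      =O[𝓝[>] 0] fun lam => lam⁻¹ := by
    simpa using ((isBigO_refl (fun lam : ℝ => lam⁻¹) _).const_mul_left c).mul
      ((tendsto_log_one_sub_exp_neg_mul_sub_log hm).isBigO_one ℝ)
  refine (hmain.sub hlog).congr_left fun lam => ?_
  ring

end HeatTraceAsymptotics

end BoseGas

theorem isBigO_evenKernel_zero_sq_sub_inv :
    (fun a => evenKernel 0 a ^ 2 - a⁻¹) =O[𝓝[>] 0] fun _ => (1 : ℝ) := by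
  obtain ⟨p, hp, hdecay⟩ := isBigO_atTop_evenKernel_sub 0
  simp only [if_true] at hdecay
  have hsub : (fun x => evenKernel 0 x - 1) =O[atTop] fun x => x⁻¹ := by
    simpa only [rpow_neg_one] using hdecay.trans (isLittleO_exp_neg_mul_rpow_atTop hp (-1)).isBigO
  have hadd : (fun x => evenKernel 0 x + 1) =O[atTop] fun _ => (1 : ℝ) := by
    refine ((hsub.trans (tendsto_inv_atTop_zero.isBigO_one ℝ)).add
      (isBigO_const_const (2 : ℝ) one_ne_zero _)).congr_left fun x => ?_
    ring
  have hlarge : (fun x => x * ((evenKernel 0 x - 1) * (evenKernel 0 x + 1)))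
      =O[atTop] fun _ => (1 : ℝ) := by
    refine ((isBigO_refl (fun x : ℝ => x) _).mul (hsub.mul hadd)).congr' .rfl ?_
    filter_upwards [eventually_ne_atTop 0] with x hx
    rw [mul_one, mul_inv_cancel₀ hx]
  refine (hlarge.comp_tendsto tendsto_inv_nhdsGT_zero).congr' ?_ .rfl
  filter_upwards [self_mem_nhdsWithin] with a ha
  have hfe : evenKernel 0 a = (√a)⁻¹ * evenKernel 0 a⁻¹ := by
    simpa only [← evenKernel_eq_cosKernel_of_zero, sqrt_eq_rpow, one_div] using
      evenKernel_functional_equation 0 a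
  rw [Function.comp_apply, hfe, mul_pow, inv_pow, sq_sqrt (le_of_lt ha)]
  ring

section TorusSpectrum

/-- The eigenvalues of `-Δ` on the circle of length `1`, indexed by frequency. -/
noncomputable def circleSpectrum (n : ℤ) : ℝ :=
  4 * π ^ 2 * (n : ℝ) ^ 2

/-- The eigenvalues of `-Δ` on the torus `(ℝ/ℤ)²`, indexed by frequency. -/
noncomputable def torusSpectrum (k : ℤ × ℤ) : ℝ :=
  circleSpectrum k.1 + circleSpectrum k.2

theorem circleSpectrum_nonneg (n : ℤ) : 0 ≤ circleSpectrum n := by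
  unfold circleSpectrum
  positivity

theorem torusSpectrum_nonneg (k : ℤ × ℤ) : 0 ≤ torusSpectrum k :=
  add_nonneg (circleSpectrum_nonneg _) (circleSpectrum_nonneg _)

variable {t : ℝ}

theorem hasSum_exp_neg_mul_circleSpectrum (ht : 0 < t) :
    HasSum (fun n => exp (-(t * circleSpectrum n))) (evenKernel 0 (4 * π * t)) := by
  refine (hasSum_int_evenKernel 0 (by positivity : 0 < 4 * π * t)).congr_fun fun n => ?_
  rw [circleSpectrum]
  ring_nf

theorem summable_exp_neg_mul_torusSpectrum (ht : 0 < t) :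
    Summable fun k => exp (-(t * torusSpectrum k)) :=
  have hs := (hasSum_exp_neg_mul_circleSpectrum ht).summable
  summable_exp_neg_mul_add hs hs

theorem heatTrace_torusSpectrum (ht : 0 < t) :
    heatTrace torusSpectrum t = evenKernel 0 (4 * π * t) ^ 2 := by
  have hsum := hasSum_exp_neg_mul_circleSpectrum ht
  rw [sq, ← hsum.tsum_eq]
  exact heatTrace_add hsum.summable hsum.summable

theorem isBigO_heatTrace_torusSpectrum_sub :
    (fun t => heatTrace torusSpectrum t - 1 / (4 * π) / t) =O[𝓝[>] 0] fun _ => (1 : ℝ) := by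
  have hscale : Tendsto (fun t : ℝ => 4 * π * t) (𝓝[>] 0) (𝓝[>] 0) := by
    refine tendsto_nhdsWithin_iff.2 ⟨?_, ?_⟩
    · exact ((continuous_const_mul (4 * π)).tendsto' 0 0 (mul_zero _)).mono_left nhdsWithin_le_nhds
    · filter_upwards [self_mem_nhdsWithin] with t ht using mul_pos (by positivity : 0 < 4 * π) ht
  refine (isBigO_evenKernel_zero_sq_sub_inv.comp_tendsto hscale).congr' ?_ .rfl
  filter_upwards [self_mem_nhdsWithin] with t ht
  rw [heatTrace_torusSpectrum ht, Function.comp_apply, div_div, one_div]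

end TorusSpectrum

/-- As `λ → 0⁺`, `N₀(λ) = Σ_{k ∈ ℤ²} 1/(e^{λ(4π²|k|²+1)} - 1)` satisfies
`N₀(λ) = -(1/(4π)) λ⁻¹ log λ + O(λ⁻¹)`. -/
theorem free_particle_number_asymptotics :
    (fun lam : ℝ =>
        (∑' k : ℤ × ℤ,
          1 / (Real.exp (lam * (4 * π ^ 2 * ((k.1 : ℝ) ^ 2 + (k.2 : ℝ) ^ 2) + 1)) - 1))
        - (-(1 / (4 * π)) * lam⁻¹ * Real.log lam))
      =O[nhdsWithin 0 (Set.Ioi 0)] fun lam : ℝ => lam⁻¹ := by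
  simpa only [particleNumber, torusSpectrum, circleSpectrum, ← mul_add] using
    isBigO_particleNumber_add_const_sub torusSpectrum_nonneg
      (fun _ => summable_exp_neg_mul_torusSpectrum) one_pos isBigO_heatTrace_torusSpectrum_sub
end

section
/- Second Berezin–Lieb inequality: let 𝔎 be a K-dimensional Hilbert space and Γ a state on the Fock space 𝔉(𝔎) admitting a nonnegative upper symbol ν, i.e. Γ = ∫_𝔎 ν(u)|ξ(u)⟩⟨ξ(u)| du with ν ≥ 0 and ∫ν = 1. Then for every convex function f : ℝ⁺ → ℝ, Tr[f(Γ)] ≤ π^{-K} ∫_𝔎 f(π^K ν(u)) du. -/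
open scoped InnerProductSpace

/-!
By Parseval, the Husimi measures `|⟨ξ u, e i⟩|² du` of a Hilbert basis `e` sum to Lebesgue measure.
By the resolution of identity each of them has mass `π ^ K`, and `μ i` is the average of `π ^ K ν`
against the `i`-th one, so the theorem is Jensen's inequality for each of these measures, summed
over `i`. The resolution of identity is a Gaussian integral between coherent states; it extends to
all vectors by totality of the coherent states and Fatou's lemma.
-/

open MeasureTheory Filter Topology
open scoped ENNReal NNReal

section Jensen

variable {s : Set ℝ} {f : ℝ → ℝ} {x : ℝ}

theorem exists_forall_add_mul_sub_le_of_mem_interior (hf : ConvexOn ℝ s f)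
    (hx : x ∈ interior s) : ∃ k, ∀ y ∈ s, f x + k * (y - x) ≤ f y := by
  refine ⟨derivWithin f (Set.Ioi x) x, fun y hy => ?_⟩
  rcases lt_trichotomy x y with hxy | rfl | hyx
  · have h := hf.rightDeriv_le_slope_of_mem_interior hx hy hxy
    rw [slope_def_field, le_div_iff₀ (sub_pos.2 hxy)] at h
    linarith
  · simp
  · have h := (hf.slope_le_leftDeriv_of_mem_interior hy hx hyx).trans
      (hf.leftDeriv_le_rightDeriv_of_mem_interior hx)
    rw [slope_def_field, div_le_iff₀ (sub_pos.2 hyx)] at h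
    linarith

theorem forall_le_or_forall_ge_of_notMem_interior (hs : s.OrdConnected) (hx : x ∉ interior s) :
    (∀ y ∈ s, x ≤ y) ∨ ∀ y ∈ s, y ≤ x := by
  contrapose! hx
  obtain ⟨⟨a, ha, hax⟩, b, hb, hxb⟩ := hx
  exact mem_interior_iff_mem_nhds.2 (mem_of_superset (Icc_mem_nhds hax hxb) (hs.out ha hb))

variable {X : Type*} [MeasurableSpace X] {P : Measure X} {g : X → ℝ}

theorem ae_eq_integral_of_integral_notMem_interior [IsProbabilityMeasure P]
    (hs : s.OrdConnected) (hgs : ∀ᵐ u ∂P, g u ∈ s) (hg : Integrable g P)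
    (hmean : ∫ u, g u ∂P ∉ interior s) : g =ᵐ[P] fun _ => ∫ u, g u ∂P := by
  have hconst : ∫ _, (∫ u, g u ∂P) ∂P = ∫ u, g u ∂P := by simp
  rcases forall_le_or_forall_ge_of_notMem_interior hs hmean with h | h
  · exact ((integral_eq_iff_of_ae_le (integrable_const _) hg
      (hgs.mono fun u hu => h _ hu)).1 hconst).symm
  · exact (integral_eq_iff_of_ae_le hg (integrable_const _)
      (hgs.mono fun u hu => h _ hu)).1 hconst.symm

-- The mean of `g` is an end point of `s` only if `g` is a.e. constant, so a jump of `f` at an end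
-- point, excluded in `ConvexOn.map_integral_le`, does no harm.
theorem convexOn_map_integral_le [IsProbabilityMeasure P] (hf : ConvexOn ℝ s f)
    (hgs : ∀ᵐ u ∂P, g u ∈ s) (hg : Integrable g P) (hfg : Integrable (fun u => f (g u)) P) :
    f (∫ u, g u ∂P) ≤ ∫ u, f (g u) ∂P := by
  by_cases hmean : ∫ u, g u ∂P ∈ interior s
  · obtain ⟨k, hk⟩ := exists_forall_add_mul_sub_le_of_mem_interior hf hmean
    set x := ∫ u, g u ∂P with hx
    have hdev : Integrable (fun u => k * (g u - x)) P :=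
      (hg.sub (integrable_const x)).const_mul k
    calc f x = ∫ u, (f x + k * (g u - x)) ∂P := by
          rw [integral_add (integrable_const _) hdev, integral_const_mul,
            integral_sub hg (integrable_const _), ← hx]
          simp
      _ ≤ ∫ u, f (g u) ∂P :=
          integral_mono_ae ((integrable_const _).add hdev) hfg (hgs.mono fun u hu => hk _ hu)
  · have hae : (fun u => f (g u)) =ᵐ[P] fun _ => f (∫ u, g u ∂P) :=
      (ae_eq_integral_of_integral_notMem_interior hf.1.ordConnected hgs hg hmean).fun_comp f
    simp [integral_congr_ae hae]

theorem convexOn_map_average_le [IsFiniteMeasure P] [NeZero P] (hf : ConvexOn ℝ s f)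
    (hgs : ∀ᵐ u ∂P, g u ∈ s) (hg : Integrable g P) (hfg : Integrable (fun u => f (g u)) P) :
    f (⨍ u, g u ∂P) ≤ ⨍ u, f (g u) ∂P :=
  convexOn_map_integral_le hf (Measure.ae_mono' Measure.smul_absolutelyContinuous hgs)
    hg.to_average hfg.to_average

theorem tsum_map_average_le_integral_sum {ι : Type*} {Q : ι → Measure X} {c : ℝ} (hc : 0 < c)
    (hmass : ∀ i, (Q i).real Set.univ = c) (hf : ConvexOn ℝ s f)
    (hgs : ∀ᵐ u ∂Measure.sum Q, g u ∈ s) (hg : Integrable g (Measure.sum Q))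
    (hfg : Integrable (fun u => f (g u)) (Measure.sum Q))
    (hsum : Summable fun i => f (⨍ u, g u ∂Q i)) :
    ∑' i, f (⨍ u, g u ∂Q i) ≤ c⁻¹ * ∫ u, f (g u) ∂Measure.sum Q := by
  have hjensen (i : ι) : f (⨍ u, g u ∂Q i) ≤ c⁻¹ * ∫ u, f (g u) ∂Q i := by
    have hle := Measure.le_sum Q i
    have hreal : (Q i).real Set.univ ≠ 0 := (hmass i).trans_ne hc.ne'
    have : IsFiniteMeasure (Q i) :=
      ⟨lt_top_iff_ne_top.2 fun htop => hreal (by simp [measureReal_def, htop])⟩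
    have : NeZero (Q i) := ⟨fun hzero => hreal (by simp [hzero])⟩
    rw [← hmass i, ← smul_eq_mul, ← average_eq]
    exact convexOn_map_average_le hf (ae_mono hle hgs) (hg.mono_measure hle)
      (hfg.mono_measure hle)
  exact hasSum_le hjensen hsum.hasSum ((hasSum_integral_measure hfg).mul_left c⁻¹)

end Jensen

section SumOfMeasures

variable {X : Type*} [MeasurableSpace X] {m : Measure X} {ι : Type*}

theorem countable_of_forall_finsetSum_le [SigmaFinite m] {Q : ι → Measure X}
    (hne : ∀ i, Q i ≠ 0) (hle : ∀ t : Finset ι, ∑ i ∈ t, Q i ≤ m) : Countable ι := by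
  have hcount (n : ℕ) : {i | Q i (spanningSets m n) ≠ 0}.Countable := by
    refine Summable.countable_support_ennreal
      (ne_top_of_le_ne_top (measure_spanningSets_lt_top m n).ne ?_)
    rw [ENNReal.tsum_eq_iSup_sum]
    exact iSup_le fun t => by simpa using hle t (spanningSets m n)
  have hcover : ⋃ n, {i | Q i (spanningSets m n) ≠ 0} = Set.univ := by
    refine Set.eq_univ_of_forall fun i => ?_
    by_contra! hi
    refine hne i (Measure.measure_univ_eq_zero.1 ?_)
    rw [← iUnion_spanningSets m, measure_iUnion_null_iff]
    simpa using hi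
  exact Set.countable_univ_iff.1 (hcover ▸ Set.countable_iUnion hcount)

theorem sum_withDensity_eq_self [SigmaFinite m] {p : ι → X → ℝ≥0∞} (hp : ∀ i, Measurable (p i))
    (hsum : ∀ u, ∑' i, p i u = 1) (hne : ∀ i, m.withDensity (p i) ≠ 0) :
    Measure.sum (fun i => m.withDensity (p i)) = m := by
  have : Countable ι := by
    refine countable_of_forall_finsetSum_le (m := m) hne fun t => Measure.le_iff.2 fun A hA => ?_
    calc (∑ i ∈ t, m.withDensity (p i)) A = ∫⁻ u in A, ∑ i ∈ t, p i u ∂m := by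
          simp [withDensity_apply _ hA, lintegral_finsetSum _ fun i _ => hp i]
      _ ≤ ∫⁻ _ in A, 1 ∂m := lintegral_mono fun u => (ENNReal.sum_le_tsum t).trans (hsum u).le
      _ = m A := setLIntegral_one A
  have htsum : ∑' i, p i = 1 := by
    ext u
    rw [tsum_apply (Pi.summable.2 fun _ => ENNReal.summable), hsum, Pi.one_apply]
  rw [← withDensity_tsum hp, htsum, withDensity_one]

end SumOfMeasures

section CoherentFamily

variable {X : Type*} [MeasurableSpace X] {m : Measure X} {𝕜 F : Type*} [RCLike 𝕜]
  [NormedAddCommGroup F] [InnerProductSpace 𝕜 F] {ξ : X → F} {c : ℝ}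

theorem tsum_enorm_inner_sq {ι : Type*} (e : HilbertBasis ι 𝕜 F) (y : F) :
    ∑' i, ‖⟪y, e i⟫_𝕜‖ₑ ^ 2 = ‖y‖ₑ ^ 2 := by
  have hparseval : HasSum (fun i => ‖⟪y, e i⟫_𝕜‖ ^ 2) (‖y‖ ^ 2) := by
    have h := RCLike.hasSum_re 𝕜 (e.hasSum_inner_mul_inner y y)
    simpa only [inner_mul_symm_re_eq_norm, norm_mul, norm_inner_symm (e _) y, ← pow_two,
      inner_self_eq_norm_sq] using h
  simp_rw [← ofReal_norm, ← ENNReal.ofReal_pow (norm_nonneg _)]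
  rw [← hparseval.tsum_eq, ENNReal.ofReal_tsum_of_nonneg (fun i => by positivity)
    hparseval.summable]

variable (𝕜) in
/-- A weakly measurable family `ξ` of unit vectors that resolves `c` times the identity:
`∫ |ξ u⟩⟨ξ u| dm = c`, written as an equality of quadratic forms. -/
structure IsCoherentFamily (ξ : X → F) (m : Measure X) (c : ℝ) : Prop where
  measurable_inner : ∀ x, Measurable fun u => ⟪ξ u, x⟫_𝕜
  norm_eq_one : ∀ u, ‖ξ u‖ = 1
  lintegral_enorm_inner_sq : ∀ x, ∫⁻ u, ‖⟪ξ u, x⟫_𝕜‖ₑ ^ 2 ∂m = ENNReal.ofReal c * ‖x‖ₑ ^ 2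

variable (𝕜) in
/-- The Husimi measure `|⟨ξ u, x⟩|² dm(u)` of a vector `x`: the phase-space distribution of the
pure state `|x⟩⟨x|` relative to the family `ξ`. -/
noncomputable def husimiMeasure (ξ : X → F) (m : Measure X) (x : F) : Measure X :=
  m.withDensity fun u => ‖⟪ξ u, x⟫_𝕜‖ₑ ^ 2

namespace IsCoherentFamily

theorem integral_husimiMeasure (hξ : IsCoherentFamily 𝕜 ξ m c) (g : X → ℝ) (x : F) :
    ∫ u, g u ∂husimiMeasure 𝕜 ξ m x = ∫ u, g u * ‖⟪ξ u, x⟫_𝕜‖ ^ 2 ∂m := by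
  rw [husimiMeasure, integral_withDensity_eq_integral_toReal_smul
    ((hξ.measurable_inner x).enorm.pow_const 2) (.of_forall fun u => by finiteness)]
  simp [mul_comm]

theorem husimiMeasure_real_univ (hξ : IsCoherentFamily 𝕜 ξ m c) (hc : 0 ≤ c) (x : F) :
    (husimiMeasure 𝕜 ξ m x).real Set.univ = c * ‖x‖ ^ 2 := by
  rw [measureReal_def, husimiMeasure, withDensity_apply _ .univ, setLIntegral_univ,
    hξ.lintegral_enorm_inner_sq]
  simp [hc]

theorem sum_husimiMeasure [SigmaFinite m] (hξ : IsCoherentFamily 𝕜 ξ m c) (hc : 0 < c)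
    {ι : Type*} (e : HilbertBasis ι 𝕜 F) :
    Measure.sum (fun i => husimiMeasure 𝕜 ξ m (e i)) = m := by
  refine sum_withDensity_eq_self (fun i => (hξ.measurable_inner (e i)).enorm.pow_const 2)
    (fun u => ?_) fun i hzero => ?_
  · rw [tsum_enorm_inner_sq, ← ofReal_norm, hξ.norm_eq_one]
    simp
  · have hmass := hξ.husimiMeasure_real_univ hc.le (e i)
    rw [husimiMeasure, hzero, e.orthonormal.1] at hmass
    simp [hc.ne] at hmass

theorem average_husimiMeasure (hξ : IsCoherentFamily 𝕜 ξ m c) (hc : 0 < c) (ν : X → ℝ) {x : F}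
    (hx : ‖x‖ = 1) :
    ⨍ u, c * ν u ∂husimiMeasure 𝕜 ξ m x = ∫ u, ν u * ‖⟪ξ u, x⟫_𝕜‖ ^ 2 ∂m := by
  rw [average_eq, hξ.husimiMeasure_real_univ hc.le, hx, integral_const_mul,
    hξ.integral_husimiMeasure, smul_eq_mul, one_pow, mul_one, inv_mul_cancel_left₀ hc.ne']

end IsCoherentFamily

theorem inner_mul_inner_swap (x y : F) : ⟪x, y⟫_𝕜 * ⟪y, x⟫_𝕜 = ((‖⟪y, x⟫_𝕜‖ ^ 2 : ℝ) : 𝕜) := by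
  rw [← inner_conj_symm x y, RCLike.conj_mul, RCLike.ofReal_pow]

theorem integral_mul_inner_mul_inner_self (ν : X → ℝ) (x : F) :
    ∫ u, (ν u : 𝕜) * ⟪x, ξ u⟫_𝕜 * ⟪ξ u, x⟫_𝕜 ∂m =
      ((∫ u, ν u * ‖⟪ξ u, x⟫_𝕜‖ ^ 2 ∂m : ℝ) : 𝕜) := by
  rw [← integral_ofReal]
  congr 1 with u
  rw [mul_assoc, inner_mul_inner_swap, RCLike.ofReal_mul]

theorem berezin_lieb_upper_general [SigmaFinite m] (hξ : IsCoherentFamily 𝕜 ξ m c) (hc : 0 < c)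
    {s : Set ℝ} {ν : X → ℝ} (hνs : ∀ᵐ u ∂m, c * ν u ∈ s) (hν : Integrable ν m) {Γ : F →L[𝕜] F}
    (hΓ : ∀ x y, ⟪x, Γ y⟫_𝕜 = ∫ u, (ν u : 𝕜) * ⟪x, ξ u⟫_𝕜 * ⟪ξ u, y⟫_𝕜 ∂m)
    {ι : Type*} (e : HilbertBasis ι 𝕜 F) {μ : ι → ℝ} (hμ : ∀ i, ⟪e i, Γ (e i)⟫_𝕜 = μ i)
    {f : ℝ → ℝ} (hf : ConvexOn ℝ s f) (hsum : Summable fun i => f (μ i))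
    (hint : Integrable (fun u => f (c * ν u)) m) :
    ∑' i, f (μ i) ≤ c⁻¹ * ∫ u, f (c * ν u) ∂m := by
  set Q : ι → Measure X := fun i => husimiMeasure 𝕜 ξ m (e i)
  have hQ : Measure.sum Q = m := hξ.sum_husimiMeasure hc e
  have hmass (i : ι) : (Q i).real Set.univ = c := by
    simpa [e.orthonormal.1 i] using hξ.husimiMeasure_real_univ hc.le (e i)
  have hμQ (i : ι) : μ i = ⨍ u, c * ν u ∂Q i := by
    rw [hξ.average_husimiMeasure hc ν (e.orthonormal.1 i)]
    exact_mod_cast (hμ i).symm.trans ((hΓ _ _).trans (integral_mul_inner_mul_inner_self ν (e i)))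
  simp_rw [hμQ] at hsum ⊢
  conv_rhs => rw [← hQ]
  rw [← hQ] at hνs hν hint
  exact tsum_map_average_le_integral_sum hc hmass hf hνs (hν.const_mul c) hint hsum

end CoherentFamily

section TotalFamily

variable {X : Type*} [MeasurableSpace X] {m : Measure X} {𝕜 F : Type*} [RCLike 𝕜]

-- Fatou's lemma gives `≤` for every `x`; applied to differences, it makes the left-hand side
-- continuous in `x`.
theorem eLpNorm_apply_eq_of_dense [NormedAddCommGroup F] [NormedSpace 𝕜 F] {E : Type*}
    [NormedAddCommGroup E] [NormedSpace 𝕜 E] {p : ℝ≥0∞} (hp : 1 ≤ p) {ℓ : X → F →L[𝕜] E} {C : ℝ≥0}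
    (hmeas : ∀ x, AEStronglyMeasurable (fun u => ℓ u x) m) {S : Set F} (hS : Dense S)
    (heq : ∀ x ∈ S, eLpNorm (fun u => ℓ u x) p m = C * ‖x‖ₑ) (x : F) :
    eLpNorm (fun u => ℓ u x) p m = C * ‖x‖ₑ := by
  have hlim {v : ℕ → F} {y : F} (hv : Tendsto v atTop (𝓝 y)) :
      Tendsto (fun n => C * ‖v n‖ₑ) atTop (𝓝 (C * ‖y‖ₑ)) :=
    ENNReal.Tendsto.const_mul hv.enorm (.inr ENNReal.coe_ne_top)
  have hle (y : F) : eLpNorm (fun u => ℓ u y) p m ≤ C * ‖y‖ₑ := by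
    obtain ⟨v, hvS, hv⟩ := mem_closure_iff_seq_limit.1 (hS y)
    calc eLpNorm (fun u => ℓ u y) p m ≤ liminf (fun n => eLpNorm (fun u => ℓ u (v n)) p m) atTop :=
          Lp.eLpNorm_lim_le_liminf_eLpNorm (fun n => hmeas (v n)) _
            (.of_forall fun u => ((ℓ u).continuous.tendsto y).comp hv)
      _ = liminf (fun n => C * ‖v n‖ₑ) atTop := by simp only [heq _ (hvS _)]
      _ = C * ‖y‖ₑ := (hlim hv).liminf_eq
  refine le_antisymm (hle x) ?_
  obtain ⟨v, hvS, hv⟩ := mem_closure_iff_seq_limit.1 (hS x)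
  have hbound (n : ℕ) : C * ‖v n‖ₑ ≤ eLpNorm (fun u => ℓ u x) p m + C * ‖v n - x‖ₑ := by
    calc C * ‖v n‖ₑ = eLpNorm ((fun u => ℓ u x) + fun u => ℓ u (v n - x)) p m := by
          rw [← heq _ (hvS n)]
          congr 1 with u
          simp
      _ ≤ eLpNorm (fun u => ℓ u x) p m + C * ‖v n - x‖ₑ :=
          (eLpNorm_add_le (hmeas _) (hmeas _) hp).trans (by gcongr; exact hle _)
  have hdiff : Tendsto (fun n => eLpNorm (fun u => ℓ u x) p m + C * ‖v n - x‖ₑ) atTop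
      (𝓝 (eLpNorm (fun u => ℓ u x) p m)) := by
    simpa using (hlim (tendsto_sub_nhds_zero_iff.2 hv)).const_add _
  exact le_of_tendsto_of_tendsto' (hlim hv) hdiff hbound

variable [NormedAddCommGroup F] [InnerProductSpace 𝕜 F] {ξ : X → F} {c : ℝ} {S : Set F}

theorem integral_inner_mul_inner_of_mem_span
    (hint : ∀ x ∈ S, ∀ y ∈ S, Integrable (fun u => ⟪x, ξ u⟫_𝕜 * ⟪ξ u, y⟫_𝕜) m)
    (heq : ∀ x ∈ S, ∀ y ∈ S, ∫ u, ⟪x, ξ u⟫_𝕜 * ⟪ξ u, y⟫_𝕜 ∂m = c * ⟪x, y⟫_𝕜)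
    {x y : F} (hx : x ∈ Submodule.span 𝕜 S) (hy : y ∈ Submodule.span 𝕜 S) :
    Integrable (fun u => ⟪x, ξ u⟫_𝕜 * ⟪ξ u, y⟫_𝕜) m ∧
      ∫ u, ⟪x, ξ u⟫_𝕜 * ⟪ξ u, y⟫_𝕜 ∂m = c * ⟪x, y⟫_𝕜 := by
  induction hx, hy using Submodule.span_induction₂ with
  | mem_mem x y hx hy => exact ⟨hint x hx y hy, heq x hx y hy⟩
  | zero_left _ _ => simp
  | zero_right _ _ => simp
  | add_left x y z hx hy hz hxz hyz =>
    simp only [inner_add_left, add_mul]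
    exact ⟨hxz.1.add hyz.1, by rw [integral_add hxz.1 hyz.1, hxz.2, hyz.2, mul_add]⟩
  | add_right x y z hx hy hz hxy hxz =>
    simp only [inner_add_right, mul_add]
    exact ⟨hxy.1.add hxz.1, by rw [integral_add hxy.1 hxz.1, hxy.2, hxz.2]⟩
  | smul_left r x y hx hy hxy =>
    simp only [inner_smul_left, mul_assoc, mul_left_comm (c : 𝕜)]
    exact ⟨hxy.1.const_mul _, by rw [integral_const_mul, hxy.2]⟩
  | smul_right r x y hx hy hxy =>
    simp only [inner_smul_right, mul_left_comm _ r]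
    exact ⟨hxy.1.const_mul _, by rw [integral_const_mul, hxy.2]⟩

theorem lintegral_enorm_inner_sq_of_integral_eq {x : F}
    (hint : Integrable (fun u => ⟪x, ξ u⟫_𝕜 * ⟪ξ u, x⟫_𝕜) m)
    (heq : ∫ u, ⟪x, ξ u⟫_𝕜 * ⟪ξ u, x⟫_𝕜 ∂m = c * ⟪x, x⟫_𝕜) :
    ∫⁻ u, ‖⟪ξ u, x⟫_𝕜‖ₑ ^ 2 ∂m = ENNReal.ofReal c * ‖x‖ₑ ^ 2 := by
  simp_rw [inner_mul_inner_swap] at hint heq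
  rw [integral_ofReal, inner_self_eq_norm_sq_to_K] at heq
  have hnorm : ∫ u, ‖⟪ξ u, x⟫_𝕜‖ ^ 2 ∂m = c * ‖x‖ ^ 2 := by exact_mod_cast heq
  have hint' : Integrable (fun u => ‖⟪ξ u, x⟫_𝕜‖ ^ 2) m := by simpa using hint.re
  simp_rw [← ofReal_norm, ← ENNReal.ofReal_pow (norm_nonneg _)]
  rw [← ENNReal.ofReal_mul' (by positivity), ← hnorm,
    ofReal_integral_eq_lintegral_ofReal hint' (.of_forall fun u => by positivity)]

theorem lintegral_enorm_inner_sq_of_total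
    (hS : (Submodule.span 𝕜 S).topologicalClosure = ⊤)
    (hmeas : ∀ x, AEStronglyMeasurable (fun u => ⟪ξ u, x⟫_𝕜) m)
    (hint : ∀ x ∈ S, ∀ y ∈ S, Integrable (fun u => ⟪x, ξ u⟫_𝕜 * ⟪ξ u, y⟫_𝕜) m)
    (heq : ∀ x ∈ S, ∀ y ∈ S, ∫ u, ⟪x, ξ u⟫_𝕜 * ⟪ξ u, y⟫_𝕜 ∂m = c * ⟪x, y⟫_𝕜) (x : F) :
    ∫⁻ u, ‖⟪ξ u, x⟫_𝕜‖ₑ ^ 2 ∂m = ENNReal.ofReal c * ‖x‖ₑ ^ 2 := by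
  set C : ℝ≥0 := NNReal.sqrt c.toNNReal
  have hC : ENNReal.ofReal c = (C : ℝ≥0∞) ^ 2 := by
    rw [← ENNReal.coe_pow, NNReal.sq_sqrt, ENNReal.ofReal]
  have hsq (y : F) : ∫⁻ u, ‖⟪ξ u, y⟫_𝕜‖ₑ ^ 2 ∂m = eLpNorm (fun u => ⟪ξ u, y⟫_𝕜) 2 m ^ 2 := by
    simpa using (eLpNorm_nnreal_pow_eq_lintegral (p := 2) two_ne_zero).symm
  have hspan (y : F) (hy : y ∈ Submodule.span 𝕜 S) :
      eLpNorm (fun u => ⟪ξ u, y⟫_𝕜) 2 m = C * ‖y‖ₑ := by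
    obtain ⟨hinty, heqy⟩ := integral_inner_mul_inner_of_mem_span hint heq hy hy
    refine (ENNReal.pow_right_strictMono two_ne_zero).injective ?_
    simpa only [← hsq, mul_pow, ← hC] using lintegral_enorm_inner_sq_of_integral_eq hinty heqy
  have hnorm : eLpNorm (fun u => ⟪ξ u, x⟫_𝕜) 2 m = C * ‖x‖ₑ :=
    eLpNorm_apply_eq_of_dense one_le_two (ℓ := fun u => innerSL 𝕜 (ξ u)) hmeas
      (Submodule.dense_iff_topologicalClosure_eq_top.2 hS) hspan x
  rw [hsq, hC, ← mul_pow, hnorm]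

end TotalFamily

section GaussianIntegral

theorem integral_cexp_mul_add_conj_mul_sub_normSq (a b : ℂ) :
    ∫ z : ℂ, Complex.exp (a * z + (starRingEnd ℂ) z * b - (Complex.normSq z : ℂ)) =
      Real.pi * Complex.exp (a * b) := by
  -- In real coordinates `z = x + iy` the linear terms are `(a + b) x + i (a - b) y`.
  have hgauss := GaussianFourier.integral_cexp_neg_mul_sum_add (b := 1) (by simp)
    ![a + b, Complex.I * (a - b)]
  rw [← Complex.volume_preserving_equiv_pi.integral_comp'] at hgauss
  have hexponent (z : ℂ) : a * z + (starRingEnd ℂ) z * b - (Complex.normSq z : ℂ) =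
      -1 * (z.re ^ 2 + z.im ^ 2 : ℂ) + ((a + b) * z.re + Complex.I * (a - b) * z.im) := by
    have hconj : (starRingEnd ℂ) z = z.re - z.im * Complex.I := by
      apply Complex.ext <;> simp
    rw [hconj, Complex.normSq_apply]
    nth_rw 1 [← Complex.re_add_im z]
    push_cast
    ring
  have hvalue : ((a + b) ^ 2 + (Complex.I * (a - b)) ^ 2) / 4 = a * b := by
    rw [mul_pow, Complex.I_sq]
    ring
  simpa [hexponent, hvalue, Complex.measurableEquivPi_apply] using hgauss

theorem integral_cexp_sum_mul_add_sum_conj_mul_sub_sum_normSq {κ : Type*} [Fintype κ]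
    (a b : κ → ℂ) :
    ∫ z : κ → ℂ, Complex.exp (∑ j, a j * z j + ∑ j, (starRingEnd ℂ) (z j) * b j
      - ∑ j, (Complex.normSq (z j) : ℂ)) =
      (Real.pi : ℂ) ^ Fintype.card κ * Complex.exp (∑ j, a j * b j) := by
  simp only [← Finset.sum_add_distrib, ← Finset.sum_sub_distrib, Complex.exp_sum]
  rw [integral_fintype_prod_volume_eq_prod fun j z =>
    Complex.exp (a j * z + (starRingEnd ℂ) z * b j - (Complex.normSq z : ℂ))]
  simp [integral_cexp_mul_add_conj_mul_sub_normSq, Finset.prod_mul_distrib]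

end GaussianIntegral

section CoherentStates

theorem continuous_of_continuous_inner {X 𝕜 F : Type*} [TopologicalSpace X] [RCLike 𝕜]
    [NormedAddCommGroup F] [InnerProductSpace 𝕜 F] {ξ : X → F}
    (hξ : Continuous fun p : X × X => ⟪ξ p.1, ξ p.2⟫_𝕜) : Continuous ξ := by
  refine continuous_iff_continuousAt.2 fun u => tendsto_iff_norm_sub_tendsto_zero.2 ?_
  have hcont : Continuous fun v => √(RCLike.re
      (⟪ξ v, ξ v⟫_𝕜 - ⟪ξ v, ξ u⟫_𝕜 - ⟪ξ u, ξ v⟫_𝕜 + ⟪ξ u, ξ u⟫_𝕜)) := by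
    have hself := hξ.comp (continuous_id.prodMk continuous_id)
    have hleft := hξ.comp (continuous_id.prodMk (continuous_const (y := u)))
    have hright := hξ.comp ((continuous_const (y := u)).prodMk continuous_id)
    exact (RCLike.continuous_re.comp
      (((hself.sub hleft).sub hright).add continuous_const)).sqrt
  have hnorm (v : X) : ‖ξ v - ξ u‖ = √(RCLike.re
      (⟪ξ v, ξ v⟫_𝕜 - ⟪ξ v, ξ u⟫_𝕜 - ⟪ξ u, ξ v⟫_𝕜 + ⟪ξ u, ξ u⟫_𝕜)) := by
    rw [norm_eq_sqrt_re_inner (𝕜 := 𝕜), inner_sub_sub_self]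
  simp_rw [← hnorm] at hcont
  simpa using hcont.tendsto u

variable {F : Type*} [NormedAddCommGroup F] [InnerProductSpace ℂ F] {κ : Type*} [Fintype κ]
  {ξ : (κ → ℂ) → F}

/-- `ξ` has the overlaps `⟨ξ u, ξ v⟩ = exp(⟨u, v⟩ - |u|²/2 - |v|²/2)`, which determine the
normalized coherent states on the Fock space over `ℂ^κ` up to a unitary. -/
def HasCoherentOverlap (ξ : (κ → ℂ) → F) : Prop :=
  ∀ u v, ⟪ξ u, ξ v⟫_ℂ = Complex.exp
    ((∑ j, (starRingEnd ℂ) (u j) * v j)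
      - (∑ j, (Complex.normSq (u j) : ℂ)) / 2
      - (∑ j, (Complex.normSq (v j) : ℂ)) / 2)

namespace HasCoherentOverlap

theorem norm_eq_one (hξ : HasCoherentOverlap ξ) (u : κ → ℂ) : ‖ξ u‖ = 1 := by
  have hinner : ⟪ξ u, ξ u⟫_ℂ = 1 := by
    simp only [hξ u u, Complex.normSq_eq_conj_mul_self]
    ring_nf
    exact Complex.exp_zero
  rw [norm_eq_sqrt_re_inner (𝕜 := ℂ), hinner]
  simp

theorem continuous (hξ : HasCoherentOverlap ξ) : Continuous ξ := by
  refine continuous_of_continuous_inner (𝕜 := ℂ) ?_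
  simp only [hξ _ _]
  have := Complex.continuous_normSq
  fun_prop

theorem integral_inner_mul_inner (hξ : HasCoherentOverlap ξ) (v w : κ → ℂ) :
    ∫ u, ⟪ξ v, ξ u⟫_ℂ * ⟪ξ u, ξ w⟫_ℂ =
      ((Real.pi ^ Fintype.card κ : ℝ) : ℂ) * ⟪ξ v, ξ w⟫_ℂ := by
  set A := Complex.exp (-(∑ j, (Complex.normSq (v j) : ℂ)) / 2
    - (∑ j, (Complex.normSq (w j) : ℂ)) / 2) with hA
  calc ∫ u, ⟪ξ v, ξ u⟫_ℂ * ⟪ξ u, ξ w⟫_ℂ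
      = ∫ u : κ → ℂ, A * Complex.exp (∑ j, (starRingEnd ℂ) (v j) * u j
          + ∑ j, (starRingEnd ℂ) (u j) * w j - ∑ j, (Complex.normSq (u j) : ℂ)) := by
        congr 1 with u
        rw [hξ v u, hξ u w, hA, ← Complex.exp_add, ← Complex.exp_add]
        ring_nf
    _ = (Real.pi : ℂ) ^ Fintype.card κ *
          (A * Complex.exp (∑ j, (starRingEnd ℂ) (v j) * w j)) := by
        rw [integral_const_mul, integral_cexp_sum_mul_add_sum_conj_mul_sub_sum_normSq,
          mul_left_comm]
    _ = ((Real.pi ^ Fintype.card κ : ℝ) : ℂ) * ⟪ξ v, ξ w⟫_ℂ := by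
        rw [hξ v w, hA, ← Complex.exp_add, Complex.ofReal_pow]
        ring_nf

theorem integrable_inner_mul_inner (hξ : HasCoherentOverlap ξ) (v w : κ → ℂ) :
    Integrable fun u => ⟪ξ v, ξ u⟫_ℂ * ⟪ξ u, ξ w⟫_ℂ := by
  refine .of_integral_ne_zero ?_
  rw [hξ.integral_inner_mul_inner, hξ v w]
  exact mul_ne_zero (by exact_mod_cast (pow_pos Real.pi_pos _).ne') (Complex.exp_ne_zero _)

theorem isCoherentFamily (hξ : HasCoherentOverlap ξ)
    (htot : (Submodule.span ℂ (Set.range ξ)).topologicalClosure = ⊤) :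
    IsCoherentFamily ℂ ξ volume (Real.pi ^ Fintype.card κ) where
  measurable_inner _ := (hξ.continuous.inner continuous_const).measurable
  norm_eq_one := hξ.norm_eq_one
  lintegral_enorm_inner_sq := by
    refine lintegral_enorm_inner_sq_of_total htot
      (fun x => (hξ.continuous.inner continuous_const).aestronglyMeasurable) ?_ ?_
    · rintro _ ⟨v, rfl⟩ _ ⟨w, rfl⟩
      exact hξ.integrable_inner_mul_inner v w
    · rintro _ ⟨v, rfl⟩ _ ⟨w, rfl⟩
      exact hξ.integral_inner_mul_inner v w

end HasCoherentOverlap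

end CoherentStates

/-- Second Berezin–Lieb inequality: if the state `Γ` on the Fock space over a `K`-dimensional
space admits a nonnegative upper symbol `ν`, i.e. `Γ = ∫ ν(u)|ξ(u)⟩⟨ξ(u)| du` with `∫ ν = 1`,
where `ξ` are the normalized coherent states, and `Γ` is diagonalized in a Hilbert basis `e`
with eigenvalues `μ`, then for every convex `f : ℝ⁺ → ℝ`,
`Tr[f(Γ)] = Σ_i f(μ_i) ≤ π^{-K} ∫ f(π^K ν(u)) du`. -/
theorem berezin_lieb_upper {F : Type*} [NormedAddCommGroup F] [InnerProductSpace ℂ F]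
    [CompleteSpace F] (K : ℕ) (ξ : (Fin K → ℂ) → F)
    (hξ : ∀ u v : Fin K → ℂ,
      ⟪ξ u, ξ v⟫_ℂ = Complex.exp
        ((∑ j, (starRingEnd ℂ) (u j) * v j)
          - (∑ j, (Complex.normSq (u j) : ℂ)) / 2
          - (∑ j, (Complex.normSq (v j) : ℂ)) / 2))
    (htot : (Submodule.span ℂ (Set.range ξ)).topologicalClosure = ⊤)
    (ν : (Fin K → ℂ) → ℝ) (hν0 : ∀ u, 0 ≤ ν u) (hν1 : ∫ u : Fin K → ℂ, ν u = 1)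
    (Γ : F →L[ℂ] F)
    (hΓ : ∀ x y : F, ⟪x, Γ y⟫_ℂ =
      ∫ u : Fin K → ℂ, (ν u : ℂ) * ⟪x, ξ u⟫_ℂ * ⟪ξ u, y⟫_ℂ)
    {ι : Type*} (e : HilbertBasis ι ℂ F) (μ : ι → ℝ)
    (hμ : ∀ i, Γ (e i) = (μ i : ℂ) • e i)
    (f : ℝ → ℝ) (hf : ConvexOn ℝ (Set.Ici 0) f)
    (hsum : Summable fun i => f (μ i))
    (hint : MeasureTheory.Integrable fun u : Fin K → ℂ => f (Real.pi ^ K * ν u)) :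
    ∑' i, f (μ i) ≤ (Real.pi ^ K)⁻¹ * ∫ u : Fin K → ℂ, f (Real.pi ^ K * ν u) := by
  have hcoh : IsCoherentFamily ℂ ξ volume (Real.pi ^ K) := by
    simpa only [Fintype.card_fin] using HasCoherentOverlap.isCoherentFamily hξ htot
  have hdiag (i : ι) : ⟪e i, Γ (e i)⟫_ℂ = μ i := by
    rw [hμ, inner_smul_right, inner_self_eq_one_of_norm_eq_one (e.orthonormal.1 i), mul_one]
  exact berezin_lieb_upper_general hcoh (by positivity)
    (.of_forall fun u => mul_nonneg (by positivity) (hν0 u))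
    (.of_integral_ne_zero (hν1.trans_ne one_ne_zero)) hΓ e hdiag hf hsum hint
end
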